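/- Let T be a rectangular fluctuating tableau with r rows and length n. Then (a) P^n(T) = T, and (b) E(T) = ε(T), where ε(T) is normalized to begin at (0,…,0). -/

import Mathlib

open scoped Classical

noncomputable section

namespace FT

/-- A (raw) `r`-row integer vector; generalized partitions are the antitone ones. -/
abbrev GP (r : ℕ) := Fin r → ℤ

/-- The weakly decreasing rearrangement of a tuple. -/
def sortDesc {r : ℕ} (α : GP r) : GP r := fun i => (α ∘ Tuple.sort α) i.rev

/-- Standard basis vector (0-indexed). -/
def eV {r : ℕ} (a : Fin r) : GP r := fun i => if i = a then 1 else 0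

/-- Standard basis vector with 1-indexed row `a` (zero if out of range). -/
def eN (r : ℕ) (a : ℕ) : GP r := fun i => if (i : ℕ) + 1 = a then 1 else 0

/-- Indicator vector of a set of rows. -/
def indV {r : ℕ} (S : Finset (Fin r)) : GP r := fun i => if i ∈ S then 1 else 0

/-- `colStep r c μ λ`: `λ` is obtained from `μ` by adding (if `c ≥ 0`) or removing
(if `c ≤ 0`) a skew column of `|c|` boxes. -/
def colStep (r : ℕ) (c : ℤ) (μ lam : GP r) : Prop :=
  ∃ S : Finset (Fin r), S.card = c.natAbs ∧
    (if 0 ≤ c then lam = μ + indV S else lam = μ - indV S)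

/-- Skew fluctuating tableau of length `n` and type `c` (recorded at indices `0,…,n`;
values of `T` and `c` beyond those indices are irrelevant). -/
def IsSkewFT (r n : ℕ) (T : ℕ → GP r) (c : ℕ → ℤ) : Prop :=
  (∀ k ≤ n, Antitone (T k)) ∧ ∀ j < n, colStep r (c j) (T j) (T (j + 1))

/-- (Non-skew) fluctuating tableau: starts at the empty shape. -/
def IsFT (r n : ℕ) (T : ℕ → GP r) (c : ℕ → ℤ) : Prop :=
  IsSkewFT r n T c ∧ T 0 = 0

/-- Rectangular: the final shape is constant. -/
def Rect (r n : ℕ) (T : ℕ → GP r) : Prop := ∃ m : ℤ, ∀ i, T n i = m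

/-- Bender–Knuth involution `BK_i` (for `1 ≤ i ≤ n-1`). -/
def BK {r : ℕ} (i : ℕ) (T : ℕ → GP r) : ℕ → GP r :=
  fun k => if k = i then sortDesc (T (i + 1) + T (i - 1) - T i) else T k

/-- `BKseg a m = BK (a+m-1) ∘ ⋯ ∘ BK a` (apply `BK a` first). -/
def BKseg {r : ℕ} (a : ℕ) : ℕ → (ℕ → GP r) → ℕ → GP r
  | 0 => id
  | m + 1 => BK (a + m) ∘ BKseg a m

/-- Promotion `P = BK_{n-1} ∘ ⋯ ∘ BK_1` on length-`n` tableaux. -/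
def promo {r : ℕ} (n : ℕ) (T : ℕ → GP r) : ℕ → GP r := BKseg 1 (n - 1) T

/-- `BKsegRev a m = BK a ∘ ⋯ ∘ BK (a+m-1)` (apply `BK (a+m-1)` first). -/
def BKsegRev {r : ℕ} (a : ℕ) : ℕ → (ℕ → GP r) → ℕ → GP r
  | 0 => id
  | m + 1 => BKsegRev a m ∘ BK (a + m)

/-- Inverse of promotion: `P⁻¹ = BK_1 ∘ ⋯ ∘ BK_{n-1}`. -/
def promoInv {r : ℕ} (n : ℕ) (T : ℕ → GP r) : ℕ → GP r := BKsegRev 1 (n - 1) T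

def evacAux {r : ℕ} : ℕ → (ℕ → GP r) → ℕ → GP r
  | 0, T => T
  | m + 1, T => evacAux m (BKseg 1 (m + 1) T)

/-- Evacuation `E = BK_1 ∘ (BK_2∘BK_1) ∘ ⋯ ∘ (BK_{n-1}∘⋯∘BK_1)`. -/
def evac {r : ℕ} (n : ℕ) (T : ℕ → GP r) : ℕ → GP r := evacAux (n - 1) T

def devacAux {r : ℕ} (n : ℕ) : ℕ → (ℕ → GP r) → ℕ → GP r
  | 0, T => T
  | m + 1, T => BKseg (n - (m + 1)) (m + 1) (devacAux n m T)

/-- Dual evacuation `E* = (BK_{n-1}∘⋯∘BK_1) ∘ (BK_{n-1}∘⋯∘BK_2) ∘ ⋯ ∘ BK_{n-1}`. -/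
def devac {r : ℕ} (n : ℕ) (T : ℕ → GP r) : ℕ → GP r := devacAux n (n - 1) T

/-- `rev(-v)`. -/
def revNeg {r : ℕ} (v : GP r) : GP r := fun i => - v i.rev

/-- Time reversal `τ`. -/
def tauT {r : ℕ} (n : ℕ) (T : ℕ → GP r) : ℕ → GP r := fun k => T (n - k)

/-- `ϖ`. -/
def varpiT {r : ℕ} (T : ℕ → GP r) : ℕ → GP r := fun k => revNeg (T k)

/-- `ε`. -/
def epsT {r : ℕ} (n : ℕ) (T : ℕ → GP r) : ℕ → GP r := fun k => revNeg (T (n - k))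

/-- Sign of the `j`-th step of `T` (paper indexing: step `j` goes from `λ^{j-1}` to `λ^j`). -/
def sgnStep {r : ℕ} (T : ℕ → GP r) (j : ℕ) : ℤ :=
  if T j = T (j - 1) then 0 else if T (j - 1) ≤ T j then 1 else -1

/-- The switch involution `toggle_j` (paper indexing, `1 ≤ j ≤ n`). -/
def toggleT {r : ℕ} (j : ℕ) (T : ℕ → GP r) : ℕ → GP r :=
  fun m => if m < j then T m else fun i => T m i - sgnStep T j

/-- Number of boxes added/removed in the step from `T j` to `T (j+1)`. -/
def stepSize {r : ℕ} (T : ℕ → GP r) (j : ℕ) : ℕ :=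
  (Finset.univ.filter fun i : Fin r => T (j + 1) i ≠ T j i).card

/-- Cumulative step sizes: position of `T j` inside the oscillization. -/
def cum {r : ℕ} (T : ℕ → GP r) (j : ℕ) : ℕ := ∑ j' ∈ Finset.range j, stepSize T j'

/-- The `j`-th intermediate shape of the oscillization of the skew-column step `μ → λ`:
boxes are added smallest-row-first and removed largest-row-first. -/
def oscStep {r : ℕ} (μ lam : GP r) (j : ℕ) : GP r := fun i =>
  let S := Finset.univ.filter fun i' : Fin r => lam i' ≠ μ i'
  if i ∈ S ∧ (if μ i < lam i then (S.filter fun i' => i' ≤ i).card ≤ j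
              else (S.filter fun i' => i ≤ i').card ≤ j)
  then lam i else μ i

/-- Largest index `j ≤ n` with `cum T j ≤ k`. -/
def stdIdx {r : ℕ} (n : ℕ) (T : ℕ → GP r) (k : ℕ) : ℕ :=
  ((Finset.range (n + 1)).filter fun j => cum T j ≤ k).sup id

/-- The oscillization `std(T)` of a length-`n` tableau, a tableau of length `t = Σ|c_j|`. -/
def stdT {r : ℕ} (n : ℕ) (T : ℕ → GP r) : ℕ → GP r := fun k =>
  if stdIdx n T k = n then T n
  else oscStep (T (stdIdx n T k)) (T (stdIdx n T k + 1)) (k - cum T (stdIdx n T k))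

/-- Rows of the promotion–evacuation growth diagram: `PE t S u` is `P^u(S)`
for a length-`t` (oscillating) tableau `S`. -/
def PE {r : ℕ} (t : ℕ) (S : ℕ → GP r) (u : ℕ) : ℕ → GP r := (promo t)^[u] S

/-- `i ∈ {1,…,r-1}` is recorded at cell `(u,v)` of the growth diagram of `S`
(rows 1-indexed; `λ^{u,v} = P^u(S)(v-u)`). -/
def recorded (r t : ℕ) (S : ℕ → GP r) (i u v : ℕ) : Prop :=
  ∃ a b : Fin r,
    (PE t S (u - 1) (v - u) = PE t S u (v - u - 1) + eV a ∧
     PE t S (u - 1) (v - u + 1) = PE t S u (v - u) + eV b ∧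
     (a : ℕ) < i ∧ i ≤ (b : ℕ))
    ∨
    (PE t S u (v - u - 1) = PE t S (u - 1) (v - u) + eV a ∧
     PE t S u (v - u) = PE t S (u - 1) (v - u + 1) + eV b ∧
     (b : ℕ) < i ∧ i ≤ (a : ℕ))

/-- `i ∈ PM(T)_{u,v}` for an off-diagonal entry of the promotion matrix of `T`
(`u, v ∈ {1,…,t}`, `1 ≤ i ≤ r-1`), using the oscillization `std(T)`. -/
def PMmem (r n t : ℕ) (T : ℕ → GP r) (i u v : ℕ) : Prop :=
  1 ≤ u ∧ u ≤ t ∧ 1 ≤ v ∧ v ≤ t ∧ u ≠ v ∧ 1 ≤ i ∧ i ≤ r - 1 ∧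
    recorded r t (stdT n T) i u (if u < v then v else v + t)

/-- Graph of the partial promotion function `prom_i(T)`: `prom_i(T)(u) = v`.
By convention `prom_0 = prom_r = id` on `{1,…,t}`. -/
def promRel (r n t : ℕ) (T : ℕ → GP r) (i u v : ℕ) : Prop :=
  if i = 0 ∨ i = r then 1 ≤ u ∧ u ≤ t ∧ u = v else PMmem r n t T i u v

/-- Sum of the first `i` entries (1-indexed prefix sums). -/
def pSum {r : ℕ} (v : GP r) (i : ℕ) : ℤ :=
  ∑ j ∈ Finset.univ.filter (fun j : Fin r => (j : ℕ) < i), v j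

/-- The filled oscillized local-rule grid: row index `k` counts down from the top row
(`k = 0` is `std(λ → ν)`), column index `q` goes right; the left column is
`std(κ → λ)` read so that `grid cA κ λ ν k 0 = std(κ→λ)` at position `cA - k`. -/
def grid {r : ℕ} (cA : ℕ) (κ lam ν : GP r) : ℕ → ℕ → GP r
  | 0, q => oscStep lam ν q
  | k + 1, 0 => oscStep κ lam (cA - (k + 1))
  | k + 1, q + 1 =>
      sortDesc (grid cA κ lam ν k (q + 1) + grid cA κ lam ν (k + 1) q -
        grid cA κ lam ν k q)
  termination_by k q => (k, q)

/-- 1-indexed entry of a vector (0 if out of range). -/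
def ent {r : ℕ} (v : GP r) (h : ℕ) : ℤ := if hh : h - 1 < r then v ⟨h - 1, hh⟩ else 0

/-- The chain `j_0 = 1, j_h = ` least `h`-balance point of the lattice word of `T`
weakly after `j_{h-1}` (in `{1,…,n}`), `none` once undefined. An index `j` is an
`h`-balance point iff `(T j)_h = (T j)_{h+1}` (1-indexed rows). -/
def jChain (r n : ℕ) (T : ℕ → GP r) : ℕ → Option ℕ
  | 0 => some 1
  | h + 1 =>
    match jChain r n T h with
    | none => none
    | some jp =>
      if H : ∃ j, jp ≤ j ∧ j ≤ n ∧ ent (T j) (h + 1) = ent (T j) (h + 2) then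
        some (Nat.find H)
      else none

/-- `k`: the largest `h ≤ r-1` such that `j_1, …, j_h` are all defined. -/
def kVal (r n : ℕ) (T : ℕ → GP r) : ℕ :=
  ((Finset.range r).filter fun h => (jChain r n T h).isSome).sup id

/-- `j_h`, defaulting to `0` when undefined. -/
def jval (r n : ℕ) (T : ℕ → GP r) (h : ℕ) : ℕ := (jChain r n T h).getD 0

/-- `ω_c` for `c ∈ {0,±1,…,±r}`: top-justified column of `c` ones if `c ≥ 0`,
bottom-justified column of `|c|` minus-ones if `c < 0`. -/
def omegaGP (r : ℕ) (c : ℤ) : GP r := fun i =>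
  if 0 ≤ c then (if (i : ℕ) < c.natAbs then 1 else 0)
  else (if r - c.natAbs ≤ (i : ℕ) then -1 else 0)

/-- The extremal fluctuating tableau of type `c`: partial sums of the `ω_{c_j}`. -/
def extremal (r : ℕ) (c : ℕ → ℤ) (k : ℕ) : GP r := ∑ j ∈ Finset.range k, omegaGP r (c j)

/-- Lexicographic order: the first nonzero entry of `β - α` is positive. -/
def ltLex {r : ℕ} (α β : GP r) : Prop := ∃ i : Fin r, (∀ j, j < i → α j = β j) ∧ α i < β i

/-- Cumulative sums of `|c_j|` (block boundaries). -/
def cumC (c : ℕ → ℤ) (j : ℕ) : ℕ := ∑ j' ∈ Finset.range j, (c j').natAbs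

/-- Entry `(u,v)` (for `u,v ∈ {1,…,n}`) of the reduced promotion matrix `PMr^i(T)`:
the number of cells in the block `B_u × B_v` whose promotion-matrix entry contains `i`. -/
def PMr (r n t : ℕ) (T : ℕ → GP r) (c : ℕ → ℤ) (i u v : ℕ) : ℕ :=
  (((Finset.Icc (cumC c (u - 1) + 1) (cumC c u)) ×ˢ
    (Finset.Icc (cumC c (v - 1) + 1) (cumC c v))).filter
      fun p => PMmem r n t T i p.1 p.2).card

/-- The set of `r`-row fluctuating tableaux of length `n`, shape `lam`, type `c`,
in bundled (finitely-indexed) form. -/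
def FTset (r n : ℕ) (lam : GP r) (c : Fin n → ℤ) : Set (Fin (n + 1) → GP r) :=
  {T | (∀ k, Antitone (T k)) ∧ T 0 = 0 ∧ T (Fin.last n) = lam ∧
       ∀ j : Fin n, colStep r (c j) (T j.castSucc) (T j.succ)}


/-!
Add up, along consecutive steps of a tableau, the coordinates of the `t`-th step in a set of rows
`J_t`, where the sets move up in the Gale order as `t` grows, and maximize this weight over all
such chains.  The maximum does not decrease when the local rule is applied, because sorting a step
only exchanges rows which neither neighbouring shape distinguishes.  Promoting `n - k` times slides
the last `k` steps of `T` to the origin, where they lead from `T^0` to `E(T)^k`.  Constant chains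
bound the weight from below before the slide and summation by parts bounds it from above after the
slide, so `E(T)^k` majorizes `T^n - T^(n-k) + T^0`.

The local rule is an involution, hence so is `E`; for rectangular `T` the same bound for `E(T)` is
the reverse majorization, and antisymmetry gives `E(T)^k = m - rev(T^(n-k))`.  Finally
`P^n(T)^k = P^(n-k)(P^k(T))^k = E(P^k(T))^k`, which is `m - rev(P^k(T)^(n-k))`, and
`P^k(T)^(n-k) = E(T)^(n-k)` is `m - rev(T^k)`.
-/

open Finset Function Equiv

section Swap

variable {ι M : Type*} [DecidableEq ι] {i j : ι} {J : Finset ι}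

lemma comp_swap_sub_of_eq [Sub M] (f g : ι → M) (hg : g i = g j) :
    f ∘ swap i j - g = (f - g) ∘ swap i j := by
  funext x
  simp only [Pi.sub_apply, comp_apply, apply_swap_eq_self hg]

lemma sub_comp_swap_of_eq [Sub M] (f g : ι → M) (hf : f i = f j) :
    f - g ∘ swap i j = (f - g) ∘ swap i j := by
  funext x
  simp only [Pi.sub_apply, comp_apply, apply_swap_eq_self hf]

variable [AddCommGroup M]

lemma sum_comp_swap (J : Finset ι) (i j : ι) (f : ι → M) :
    ∑ x ∈ J, f (swap i j x) =
      ∑ x ∈ J, f x + (if i ∈ J then f j - f i else 0) + (if j ∈ J then f i - f j else 0) := by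
  rw [← sum_ite_eq' J i fun _ => f j - f i, ← sum_ite_eq' J j fun _ => f i - f j,
    ← sum_add_distrib, ← sum_add_distrib]
  refine sum_congr rfl fun x _ => ?_
  rcases eq_or_ne x i with rfl | hxi
  · rcases eq_or_ne x j with rfl | hxj <;> simp [*]
  · rcases eq_or_ne x j with rfl | hxj
    · simp [hxi]
    · simp [swap_apply_of_ne_of_ne, hxi, hxj]

lemma sum_map_swap (hj : j ∈ J) (hi : i ∉ J) (f : ι → M) :
    ∑ x ∈ J.map (swap i j).toEmbedding, f x = ∑ x ∈ J, f x + (f i - f j) := by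
  simp only [sum_map, coe_toEmbedding, sum_comp_swap, if_neg hi, if_pos hj, add_zero]

lemma sum_update_eq_add (K : Finset ι) (f : ι → M) (a : ι) (c : M) :
    ∑ x ∈ K, update f a c x = ∑ x ∈ K, f x + if a ∈ K then c - f a else 0 := by
  split_ifs with ha
  · rw [sum_update_of_mem ha, sdiff_singleton_eq_erase, ← add_sum_erase K f ha]
    abel
  · rw [sum_update_of_notMem ha, add_zero]

end Swap

section GaleOrder

variable {ι : Type*} [Preorder ι] {i j : ι} {I J : Finset ι}

/-- The Gale order on finite sets of rows, with smaller rows counted as larger: `J` is obtained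
from `I` by moving elements downwards.  It is encoded dually, through antitone weights. -/
def GaleLE (I J : Finset ι) : Prop :=
  ∀ f : ι → ℤ, Antitone f → ∑ x ∈ I, f x ≤ ∑ x ∈ J, f x

lemma GaleLE.refl (I : Finset ι) : GaleLE I I := fun _ _ => le_rfl

lemma GaleLE.card_eq (h : GaleLE I J) : #I = #J := by
  have hle := h (fun _ => 1) antitone_const
  have hge := h (fun _ => -1) antitone_const
  simp only [sum_const, nsmul_eq_mul] at hle hge
  omega

section Covering

variable [DecidableEq ι]

lemma GaleLE.map_swap_right (h : GaleLE I J) (hij : i ≤ j) (hj : j ∈ J) (hi : i ∉ J) :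
    GaleLE I (J.map (swap i j).toEmbedding) := by
  intro f hf
  rw [sum_map_swap hj hi]
  linarith [h f hf, hf hij]

lemma GaleLE.map_swap (h : GaleLE I J) (hjI : j ∈ I) (hiI : i ∉ I) (hjJ : j ∈ J) (hiJ : i ∉ J) :
    GaleLE (I.map (swap i j).toEmbedding) (J.map (swap i j).toEmbedding) := by
  intro f hf
  rw [sum_map_swap hjI hiI, sum_map_swap hjJ hiJ]
  linarith [h f hf]

/-- Monotonicity along the covering relations of the Gale order, which replace a row `j` by the
row `i` just before it. -/
def GaleCoverMono (G : Finset ι → ℤ) : Prop :=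
  ∀ ⦃I i j⦄, i ⋖ j → j ∈ I → i ∉ I → G I ≤ G (I.map (swap i j).toEmbedding)

lemma galeCoverMono_sum {f : ι → ℤ} (hf : Antitone f) : GaleCoverMono fun I => ∑ x ∈ I, f x := by
  intro I i j hij hj hi
  simp only [sum_map_swap hj hi]
  linarith [hf hij.le]

end Covering

section GaleSup

variable [Fintype ι]

/-- The largest value of `H` on the sets above `I` in the Gale order. -/
def galeSup (H : Finset ι → ℤ) (I : Finset ι) : ℤ :=
  (univ.filter (GaleLE I)).sup' ⟨I, by simpa using GaleLE.refl I⟩ H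

lemma le_galeSup (H : Finset ι → ℤ) (h : GaleLE I J) : H J ≤ galeSup H I :=
  le_sup' H (by simpa using h)

lemma galeSup_le_iff {H : Finset ι → ℤ} {a : ℤ} :
    galeSup H I ≤ a ↔ ∀ J, GaleLE I J → H J ≤ a :=
  (sup'_le_iff _ _).trans (by simp only [mem_filter_univ])

lemma galeSup_mono {H H' : Finset ι → ℤ} (h : ∀ J, H J ≤ H' J) (I : Finset ι) :
    galeSup H I ≤ galeSup H' I :=
  galeSup_le_iff.2 fun J hJ => (h J).trans (le_galeSup H' hJ)

/-- Sorting the inversion `S i < S j` of a step `S` does not decrease the weight `galeSup`, when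
the shape `ν` after the step does not distinguish `i` and `j`. -/
lemma galeSup_le_galeSup_comp_swap [DecidableEq ι] {ν S : ι → ℤ} {F : Finset ι → ℤ}
    (hF : GaleCoverMono fun J => ∑ x ∈ J, ν x + F J) (hij : i ⋖ j) (hν : ν i = ν j)
    (hS : S i < S j) (I : Finset ι) :
    galeSup (fun J => ∑ x ∈ J, S x + F J) I ≤
      galeSup (fun J => ∑ x ∈ J, (S ∘ swap i j) x + F J) I := by
  refine galeSup_le_iff.2 fun J hIJ => ?_
  by_cases hJ : j ∈ J ∧ i ∉ J
  · refine le_trans ?_ (le_galeSup _ (hIJ.map_swap_right hij.le hJ.1 hJ.2))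
    have hFJ := hF hij hJ.1 hJ.2
    simp only [sum_map_swap hJ.1 hJ.2, hν, sub_self, add_zero] at hFJ
    simpa only [sum_map, coe_toEmbedding, comp_apply, swap_apply_self, add_le_add_iff_left]
      using le_of_add_le_add_left hFJ
  · refine le_trans ?_ (le_galeSup _ hIJ)
    have hsum := sum_comp_swap J i j S
    simp only [comp_apply, add_le_add_iff_right, hsum]
    split_ifs <;> first | linarith | tauto

end GaleSup

end GaleOrder

section GaleLinearOrder

variable {ι : Type*} [LinearOrder ι] {i j : ι} {I J : Finset ι}

lemma antitone_update_left_of_covBy {β : Type*} [Preorder β] {f : ι → β} (hf : Antitone f)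
    (hij : i ⋖ j) : Antitone (update f i (f j)) := by
  intro a b hab
  simp only [update_apply]
  split_ifs with hb ha ha
  · exact le_rfl
  · exact hf (hab.trans (hb.le.trans hij.le))
  · exact hf (hij.ge_of_gt (lt_of_le_of_ne (ha ▸ hab) (Ne.symm hb)))
  · exact hf hab

lemma antitone_update_right_of_covBy {β : Type*} [Preorder β] {f : ι → β} (hf : Antitone f)
    (hij : i ⋖ j) : Antitone (update f j (f i)) := by
  intro a b hab
  simp only [update_apply]
  split_ifs with hb ha ha
  · exact le_rfl
  · exact hf (hij.le_of_lt (lt_of_le_of_ne (hb ▸ hab) ha))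
  · exact hf (hij.le.trans (ha.ge.trans hab))
  · exact hf hab

lemma GaleLE.map_swap_left (h : GaleLE I J) (hij : i ⋖ j) (hjI : j ∈ I) (hiI : i ∉ I)
    (hJ : ¬(j ∈ J ∧ i ∉ J)) : GaleLE (I.map (swap i j).toEmbedding) J := by
  intro f hf
  rw [sum_map_swap hjI hiI]
  by_cases hjJ : j ∈ J
  · have hiJ : i ∈ J := by tauto
    have hflat := h _ (antitone_update_left_of_covBy hf hij)
    rw [sum_update_eq_add, sum_update_eq_add, if_neg hiI, if_pos hiJ] at hflat
    linarith
  · have hflat := h _ (antitone_update_right_of_covBy hf hij)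
    rw [sum_update_eq_add, sum_update_eq_add, if_pos hjI, if_neg hjJ] at hflat
    linarith

lemma galeLE_of_isLowerSet {U : Finset ι} (hU : IsLowerSet (U : Set ι)) (hcard : #U = #I) :
    GaleLE I U := by
  intro f hf
  rw [← sum_sdiff_le_sum_sdiff]
  let e : ↥(I \ U) ≃ ↥(U \ I) := equivOfCardEq (card_sdiff_comm hcard.symm)
  rw [← sum_coe_sort (I \ U), ← sum_coe_sort (U \ I), ← e.sum_comp]
  refine sum_le_sum fun x _ => hf (le_of_not_ge fun hx => ?_)
  exact (mem_sdiff.1 x.2).2 (hU hx (mem_sdiff.1 (e x).2).1)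

lemma GaleCoverMono.add_galeSup [Fintype ι] {f : ι → ℤ} {H : Finset ι → ℤ} (hf : Antitone f)
    (h : GaleCoverMono fun J => ∑ x ∈ J, f x + H J) :
    GaleCoverMono fun I => ∑ x ∈ I, f x + galeSup H I := by
  intro I i j hij hjI hiI
  suffices H_le : ∀ J, GaleLE I J →
      H J ≤ (f i - f j) + galeSup H (I.map (swap i j).toEmbedding) by
    simp only [sum_map_swap hjI hiI]
    linarith [galeSup_le_iff.2 H_le]
  intro J hIJ
  by_cases hJ : j ∈ J ∧ i ∉ J
  · have hswap := h hij hJ.1 hJ.2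
    simp only [sum_map_swap hJ.1 hJ.2] at hswap
    linarith [le_galeSup H (hIJ.map_swap hjI hiI hJ.1 hJ.2)]
  · linarith [hf hij.le, le_galeSup H (hIJ.map_swap_left hij hjI hiI hJ)]

end GaleLinearOrder

section SortDesc

variable {r : ℕ}

lemma sortDesc_eq_comp_perm (α : GP r) : sortDesc α = α ∘ Fin.revPerm.trans (Tuple.sort α) := by
  funext i
  simp [sortDesc]

lemma sortDesc_antitone (α : GP r) : Antitone (sortDesc α) :=
  fun _ _ h => Tuple.monotone_sort α (Fin.rev_le_rev.2 h)

lemma comp_perm_eq_sortDesc {α : GP r} {σ : Perm (Fin r)} (h : Antitone (α ∘ σ)) :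
    α ∘ σ = sortDesc α := by
  have hsort := sortDesc_antitone α
  rw [sortDesc_eq_comp_perm] at hsort ⊢
  exact Tuple.unique_antitone h hsort

lemma sortDesc_comp_perm (α : GP r) (σ : Perm (Fin r)) : sortDesc (α ∘ σ) = sortDesc α := by
  funext i
  exact congrFun Tuple.comp_perm_comp_sort_eq_comp_sort i.rev

lemma sortDesc_of_antitone {α : GP r} (h : Antitone α) : sortDesc α = α :=
  (comp_perm_eq_sortDesc (σ := 1) h).symm

lemma sum_sortDesc (α : GP r) : ∑ x, sortDesc α x = ∑ x, α x := by
  rw [sortDesc_eq_comp_perm]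
  exact Equiv.sum_comp _ α

/-- Bubble sort with adjacent swaps only, in contrast to `Tuple.bubble_sort_induction`. -/
lemma sortDesc_induction {P : GP r → Prop} {α : GP r} (h₀ : P α)
    (hswap : ∀ (g : GP r) (i j : Fin r), i ⋖ j → g i < g j → P g → P (g ∘ swap i j)) :
    P (sortDesc α) := by
  let := @Preorder.lift _ (Lex (Fin r → ℤᵒᵈ)) _
    fun σ : Perm (Fin r) => toLex (OrderDual.toDual ∘ α ∘ σ)
  rw [sortDesc_eq_comp_perm]
  refine (IsWellFounded.wf : WellFounded (· < ·)).induction_bot' (a := (1 : Perm (Fin r)))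
    (f := fun σ : Perm (Fin r) => α ∘ σ) (fun σ hσ hP => ?_) h₀
  have hnot : ¬Antitone (α ∘ σ) := fun hanti =>
    hσ ((comp_perm_eq_sortDesc hanti).trans (sortDesc_eq_comp_perm α))
  simp only [antitone_iff_forall_covBy, not_forall, not_le] at hnot
  obtain ⟨i, j, hij, hlt⟩ := hnot
  have hlex := Pi.lex_desc (f := OrderDual.toDual ∘ α ∘ σ) hij.le hlt
  exact ⟨σ * swap i j, hlex, hswap (α ∘ σ) i j hij hlt hP⟩

end SortDesc

section LocalRule

variable {r : ℕ} {κ lam ν : GP r}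

/-- Minuscule weights of `GL_r`: all entries differ pairwise by at most one.  Up to adding a
constant vector these are the indicators of sets of rows, i.e. the skew columns. -/
def IsMinuscule (v : GP r) : Prop := ∀ a b, v a ≤ v b + 1

/-- The new shape `BK` puts between `κ` and `ν` in place of `lam`. -/
def localRule (κ lam ν : GP r) : GP r := sortDesc (ν + κ - lam)

/-- The data `κ → lam → ν` to which the local rule applies. -/
structure IsCell (κ lam ν : GP r) : Prop where
  antitone_left : Antitone κ
  antitone_right : Antitone ν
  minuscule_left : IsMinuscule (lam - κ)
  minuscule_right : IsMinuscule (ν - lam)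

lemma IsMinuscule.comp {s : ℕ} {v : GP r} (hv : IsMinuscule v) (f : Fin s → Fin r) :
    IsMinuscule (v ∘ f) := fun _ _ => hv _ _

/-- While `ν + κ - lam` is being sorted, an inversion can only occur between rows that neither
`κ` nor `ν` distinguishes. -/
lemma eq_and_eq_of_inversion {g : GP r} {i j : Fin r} (hκ : Antitone κ) (hν : Antitone ν)
    (hgκ : IsMinuscule (g - κ)) (hνg : IsMinuscule (ν - g)) (hij : i ≤ j) (hg : g i < g j) :
    κ i = κ j ∧ ν i = ν j := by
  have hκij := hκ hij
  have hνij := hν hij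
  have hup := hgκ j i
  have hdown := hνg i j
  simp only [Pi.sub_apply] at hup hdown
  omega

namespace IsCell

lemma induction {P : GP r → Prop} (h : IsCell κ lam ν) (h₀ : P (ν + κ - lam))
    (hswap : ∀ (g : GP r) (i j : Fin r), i ⋖ j → κ i = κ j → ν i = ν j → g i < g j →
      P g → P (g ∘ swap i j)) :
    P (localRule κ lam ν) ∧ IsMinuscule (localRule κ lam ν - κ) ∧
      IsMinuscule (ν - localRule κ lam ν) := by
  refine sortDesc_induction (P := fun g => P g ∧ IsMinuscule (g - κ) ∧ IsMinuscule (ν - g))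
    ⟨h₀, ?_, ?_⟩ fun g i j hij hg ⟨hP, hgκ, hνg⟩ => ?_
  · rw [show ν + κ - lam - κ = ν - lam by abel]
    exact h.minuscule_right
  · rw [show ν - (ν + κ - lam) = lam - κ by abel]
    exact h.minuscule_left
  · obtain ⟨hκ, hν⟩ :=
      eq_and_eq_of_inversion h.antitone_left h.antitone_right hgκ hνg hij.le hg
    rw [comp_swap_sub_of_eq _ _ hκ, sub_comp_swap_of_eq _ _ hν]
    exact ⟨hswap g i j hij hκ hν hg hP, hgκ.comp _, hνg.comp _⟩

lemma isMinuscule_localRule_sub (h : IsCell κ lam ν) : IsMinuscule (localRule κ lam ν - κ) :=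
  (h.induction (P := fun _ => True) trivial fun _ _ _ _ _ _ _ _ => trivial).2.1

lemma isMinuscule_sub_localRule (h : IsCell κ lam ν) : IsMinuscule (ν - localRule κ lam ν) :=
  (h.induction (P := fun _ => True) trivial fun _ _ _ _ _ _ _ _ => trivial).2.2

lemma localRule_localRule (h : IsCell κ lam ν) (hlam : Antitone lam) :
    localRule κ (localRule κ lam ν) ν = lam := by
  refine (h.induction (P := fun g => sortDesc (ν + κ - g) = lam) ?_ ?_).1
  · rw [sub_sub_cancel, sortDesc_of_antitone hlam]
  · intro g i j _ hκ hν _ hg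
    rw [sub_comp_swap_of_eq (ν + κ) g (by simp [hκ, hν]), sortDesc_comp_perm, hg]

lemma galeSup_le_galeSup_localRule (h : IsCell κ lam ν) {F : Finset (Fin r) → ℤ}
    (hF : GaleCoverMono fun J => ∑ x ∈ J, ν x + F J) (I : Finset (Fin r)) :
    galeSup (fun J => ∑ x ∈ J, (ν - lam) x + F J) I ≤
      galeSup (fun J => ∑ x ∈ J, (localRule κ lam ν - κ) x + F J) I := by
  let P (g : GP r) : Prop := galeSup (fun J => ∑ x ∈ J, (ν - lam) x + F J) I ≤
    galeSup (fun J => ∑ x ∈ J, (g - κ) x + F J) I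
  refine (h.induction (P := P) ?_ ?_).1
  · simp only [P, show ν + κ - lam - κ = ν - lam by abel, le_refl]
  · intro g i j hij hκ hν hg hle
    simp only [P, comp_swap_sub_of_eq _ _ hκ] at hle ⊢
    exact hle.trans (galeSup_le_galeSup_comp_swap hF hij hν (by simpa [hκ] using hg) I)

end IsCell

end LocalRule

section GrowthDiagram

variable {r n : ℕ} {X : ℕ → GP r}

/-- A sequence of generalized partitions `X 0, …, X n` whose steps are minuscule weights. -/
structure IsMinusculePath (n : ℕ) (X : ℕ → GP r) : Prop where
  antitone : ∀ k ≤ n, Antitone (X k)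
  step : ∀ k < n, IsMinuscule (X (k + 1) - X k)

lemma IsMinusculePath.antitone_zero (h : IsMinusculePath n X) : Antitone (X 0) :=
  h.antitone 0 n.zero_le

/-- The next row of the growth diagram of `X`, i.e. promotion of an infinitely long tableau; on a
path of length `n + 1` only the entries `0, …, n` are meaningful. -/
def promoRow (X : ℕ → GP r) : ℕ → GP r
  | 0 => X 0
  | k + 1 => localRule (promoRow X k) (X (k + 1)) (X (k + 2))

lemma antitone_promoRow (h : Antitone (X 0)) : ∀ k, Antitone (promoRow X k)
  | 0 => h
  | _ + 1 => sortDesc_antitone _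

lemma isMinuscule_sub_promoRow (h : IsMinusculePath (n + 1) X) :
    ∀ k ≤ n, IsMinuscule (X (k + 1) - promoRow X k) := by
  intro k
  induction k with
  | zero => exact fun _ => h.step 0 (by omega)
  | succ k ih =>
    intro hk
    have hcell : IsCell (promoRow X k) (X (k + 1)) (X (k + 2)) :=
      ⟨antitone_promoRow h.antitone_zero k, h.antitone _ (by omega), ih (by omega),
        h.step _ (by omega)⟩
    exact hcell.isMinuscule_sub_localRule

lemma isCell_promoRow (h : IsMinusculePath (n + 1) X) {k : ℕ} (hk : k < n) :
    IsCell (promoRow X k) (X (k + 1)) (X (k + 2)) :=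
  ⟨antitone_promoRow h.antitone_zero k, h.antitone _ (by omega), isMinuscule_sub_promoRow h k hk.le,
    h.step _ (by omega)⟩

lemma isMinusculePath_promoRow (h : IsMinusculePath (n + 1) X) : IsMinusculePath n (promoRow X) :=
  ⟨fun k _ => antitone_promoRow h.antitone_zero k,
    fun _ hk => (isCell_promoRow h hk).isMinuscule_localRule_sub⟩

lemma isMinusculePath_promoRow_iterate (u : ℕ) (h : IsMinusculePath (n + u) X) :
    IsMinusculePath n (promoRow^[u] X) := by
  induction u generalizing X with
  | zero => exact h
  | succ _ ih => exact ih (isMinusculePath_promoRow h)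

lemma promoRow_congr {Y : ℕ → GP r} {k : ℕ} (h : ∀ j ≤ k + 1, X j = Y j) :
    promoRow X k = promoRow Y k := by
  induction k with
  | zero => exact h 0 (by omega)
  | succ k ih =>
    simp only [promoRow, ih fun j hj => h j (by omega), h (k + 1) (by omega), h (k + 2) le_rfl]

lemma promoRow_iterate_congr (u : ℕ) {Y : ℕ → GP r} {k : ℕ} (h : ∀ j ≤ k + u, X j = Y j) :
    (promoRow^[u] X) k = (promoRow^[u] Y) k := by
  induction u generalizing X Y with
  | zero => exact h k le_rfl
  | succ u ih => exact ih fun j hj => promoRow_congr fun i hi => h i (by omega)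

lemma promoRow_iterate_zero (u : ℕ) (X : ℕ → GP r) : (promoRow^[u] X) 0 = X 0 := by
  induction u generalizing X with
  | zero => rfl
  | succ _ ih => exact ih (promoRow X)

lemma sum_promoRow (X : ℕ → GP r) (k : ℕ) :
    ∑ x, promoRow X k x = ∑ x, X (k + 1) x - ∑ x, X 1 x + ∑ x, X 0 x := by
  induction k with
  | zero => simp [promoRow]
  | succ k ih =>
    simp only [promoRow, localRule, sum_sortDesc, Pi.add_apply, Pi.sub_apply, sum_add_distrib,
      sum_sub_distrib]
    linarith

lemma sum_promoRow_iterate (u : ℕ) (X : ℕ → GP r) (k : ℕ) :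
    ∑ x, (promoRow^[u] X) k x = ∑ x, X (k + u) x - ∑ x, X u x + ∑ x, X 0 x := by
  induction u generalizing X with
  | zero => simp
  | succ u ih =>
    simp only [iterate_succ_apply, ih (promoRow X), sum_promoRow, promoRow, ← add_assoc]
    abel

end GrowthDiagram

section ChainWeight

variable {r n : ℕ} {X : ℕ → GP r}

/-- The largest total weight of a Gale chain `I ≤ J₁ ≤ ⋯ ≤ J_l` along the `l` steps of `X` that
start at time `k`, where `J_t` contributes the coordinates in `J_t` of the `t`-th step. -/
def chainWeight (X : ℕ → GP r) : ℕ → ℕ → Finset (Fin r) → ℤ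
  | 0, _ => fun _ => 0
  | l + 1, k => galeSup fun J => ∑ x ∈ J, (X (k + 1) - X k) x + chainWeight X l (k + 1) J

lemma galeCoverMono_chainWeight (l k : ℕ) (h : ∀ t ≤ k + l, Antitone (X t)) :
    GaleCoverMono fun I => ∑ x ∈ I, X k x + chainWeight X l k I := by
  induction l generalizing k with
  | zero => simpa only [chainWeight, add_zero] using galeCoverMono_sum (h k le_rfl)
  | succ l ih =>
    refine GaleCoverMono.add_galeSup (h k (by omega)) ?_
    simpa only [← add_assoc, ← sum_add_distrib, Pi.sub_apply, add_sub_cancel]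
      using ih (k + 1) fun t ht => h t (by omega)

lemma chainWeight_succ_le_promoRow (h : IsMinusculePath (n + 1) X) (l k : ℕ) (hkl : k + l ≤ n)
    (I : Finset (Fin r)) : chainWeight X l (k + 1) I ≤ chainWeight (promoRow X) l k I := by
  induction l generalizing k I with
  | zero => exact le_rfl
  | succ l ih =>
    have hmono := galeCoverMono_chainWeight l (k + 2) fun t ht => h.antitone t (by omega)
    calc chainWeight X (l + 1) (k + 1) I
        ≤ galeSup (fun J => ∑ x ∈ J, (promoRow X (k + 1) - promoRow X k) x +
            chainWeight X l (k + 2) J) I :=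
          (isCell_promoRow h (by omega)).galeSup_le_galeSup_localRule hmono I
      _ ≤ chainWeight (promoRow X) (l + 1) k I :=
          galeSup_mono (fun J => by gcongr; exact ih (k + 1) (by omega) J) I

lemma chainWeight_le_promoRow_iterate (l u : ℕ) (h : IsMinusculePath (l + u) X)
    (I : Finset (Fin r)) : chainWeight X l u I ≤ chainWeight (promoRow^[u] X) l 0 I := by
  induction u generalizing X with
  | zero => exact le_rfl
  | succ u ih =>
    exact (chainWeight_succ_le_promoRow (n := l + u) h l u (by omega) I).trans
      (ih (isMinusculePath_promoRow h))

lemma sum_sub_le_chainWeight (X : ℕ → GP r) (l k : ℕ) (I : Finset (Fin r)) :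
    ∑ x ∈ I, (X (k + l) x - X k x) ≤ chainWeight X l k I := by
  induction l generalizing k with
  | zero => simp [chainWeight]
  | succ l ih =>
    refine le_trans ?_ (le_galeSup _ (GaleLE.refl I))
    have htail := ih (k + 1)
    rw [show k + 1 + l = k + (l + 1) by omega] at htail
    simp only [Pi.sub_apply, sum_sub_distrib] at htail ⊢
    linarith

lemma sum_add_chainWeight_le (l k : ℕ) (h : ∀ t ≤ k + l, Antitone (X t))
    {I U : Finset (Fin r)} (hU : IsLowerSet (U : Set (Fin r))) (hcard : #U = #I) :
    ∑ x ∈ I, X k x + chainWeight X l k I ≤ ∑ x ∈ U, X (k + l) x := by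
  induction l generalizing k I with
  | zero =>
    simpa only [chainWeight, add_zero] using galeLE_of_isLowerSet hU hcard _ (h k le_rfl)
  | succ l ih =>
    suffices hle : chainWeight X (l + 1) k I ≤ ∑ x ∈ U, X (k + (l + 1)) x - ∑ x ∈ I, X k x by
      linarith
    refine galeSup_le_iff.2 fun J hIJ => ?_
    have htail := ih (k + 1) (fun t ht => h t (by omega)) (hcard.trans hIJ.card_eq)
    rw [show k + 1 + l = k + (l + 1) by omega] at htail
    have hhead := hIJ (X k) (h k (by omega))
    simp only [Pi.sub_apply, sum_sub_distrib]
    linarith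

end ChainWeight

/-- Weak majorization of `D` by `C`, where only the initial sums of `C` are considered: for antitone
`C` these are the sums of its largest entries.  Equality of the total sums is not required. -/
def WeaklyMajorizes {ι : Type*} [Preorder ι] (C D : ι → ℤ) : Prop :=
  ∀ ⦃I U : Finset ι⦄, IsLowerSet (U : Set ι) → #U = #I → ∑ x ∈ I, D x ≤ ∑ x ∈ U, C x

section PromotionEvacuation

variable {r n : ℕ} {X : ℕ → GP r}

lemma BKseg_one_apply (X : ℕ → GP r) (q k : ℕ) :
    BKseg 1 q X k = if k ≤ q then promoRow X k else X k := by
  induction q generalizing k with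
  | zero => cases k <;> simp [BKseg, promoRow]
  | succ q ih =>
    simp only [BKseg, comp_apply, BK]
    rcases lt_trichotomy k (q + 1) with hk | rfl | hk
    · rw [if_neg (by omega), ih, if_pos (by omega), if_pos (by omega)]
    · simp [ih, add_comm 1 q, promoRow, localRule]
    · rw [if_neg (by omega), ih, if_neg (by omega), if_neg (by omega)]

lemma promo_apply_of_lt {k : ℕ} (X : ℕ → GP r) (hk : k < n) : promo n X k = promoRow X k := by
  rw [promo, BKseg_one_apply, if_pos (by omega)]

lemma promo_apply_of_le {k : ℕ} (X : ℕ → GP r) (hk : n ≤ k) : promo n X k = X k := by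
  rw [promo, BKseg_one_apply]
  split_ifs with hk'
  · obtain rfl : k = 0 := by omega
    rfl
  · rfl

lemma promo_iterate_apply_of_le {k : ℕ} (u : ℕ) (X : ℕ → GP r) (hk : n ≤ k) :
    (promo n)^[u] X k = X k := by
  induction u generalizing X with
  | zero => rfl
  | succ u ih => rw [iterate_succ_apply, ih, promo_apply_of_le X hk]

lemma promo_iterate_apply {u k : ℕ} (X : ℕ → GP r) (hk : k + u ≤ n) :
    (promo n)^[u] X k = promoRow^[u] X k := by
  induction u generalizing X with
  | zero => rfl
  | succ u ih =>
    rw [iterate_succ_apply, iterate_succ_apply, ih _ (by omega)]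
    exact promoRow_iterate_congr u fun j hj => promo_apply_of_lt X (by omega)

lemma isMinusculePath_promo (h : IsMinusculePath n X) : IsMinusculePath n (promo n X) := by
  cases n with
  | zero => exact h
  | succ n =>
    constructor
    · intro k hk
      rcases hk.lt_or_eq with hlt | rfl
      · rw [promo_apply_of_lt X hlt]
        exact antitone_promoRow h.antitone_zero k
      · rw [promo_apply_of_le X le_rfl]
        exact h.antitone _ le_rfl
    · intro k hk
      rw [promo_apply_of_lt X hk]
      rcases (Nat.lt_succ_iff.1 hk).lt_or_eq with hlt | rfl
      · rw [promo_apply_of_lt X (by omega)]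
        exact (isMinusculePath_promoRow h).step k hlt
      · rw [promo_apply_of_le X le_rfl]
        exact isMinuscule_sub_promoRow h k le_rfl

lemma isMinusculePath_promo_iterate (u : ℕ) (h : IsMinusculePath n X) :
    IsMinusculePath n ((promo n)^[u] X) :=
  Iterate.rec (IsMinusculePath n) h (fun _ => isMinusculePath_promo) u

lemma evacAux_apply (q : ℕ) (X : ℕ → GP r) (k : ℕ) :
    evacAux q X k = promoRow^[q + 1 - k] X k := by
  induction q generalizing X with
  | zero => rcases k with _ | _ | k <;> simp [evacAux, promoRow]
  | succ q ih =>
    rw [evacAux, ih]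
    rcases le_or_gt k (q + 1) with hk | hk
    · rw [show q + 1 + 1 - k = (q + 1 - k) + 1 by omega, iterate_succ_apply]
      refine promoRow_iterate_congr _ fun j hj => ?_
      rw [BKseg_one_apply, if_pos (by omega)]
    · rw [show q + 1 - k = 0 by omega, show q + 1 + 1 - k = 0 by omega, iterate_zero, id, id,
        BKseg_one_apply, if_neg (by omega)]

lemma evac_apply (n : ℕ) (X : ℕ → GP r) (k : ℕ) : evac n X k = promoRow^[n - k] X k := by
  rw [evac, evacAux_apply]
  rcases n with _ | n
  · cases k <;> simp [promoRow]
  · rw [Nat.add_sub_cancel]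

lemma promo_iterate_sub_apply {k : ℕ} (X : ℕ → GP r) (hk : k ≤ n) :
    (promo n)^[n - k] X k = evac n X k := by
  rw [evac_apply, promo_iterate_apply X (by omega)]

lemma isMinusculePath_evac (h : IsMinusculePath n X) : IsMinusculePath n (evac n X) := by
  have hrow : ∀ k ≤ n, IsMinusculePath k (promoRow^[n - k] X) := fun k hk =>
    isMinusculePath_promoRow_iterate _ (by rwa [Nat.add_sub_cancel' hk])
  refine ⟨fun k hk => ?_, fun k hk => ?_⟩
  · rw [evac_apply]
    exact (hrow k hk).antitone k le_rfl
  · rw [evac_apply, evac_apply, show n - k = (n - (k + 1)) + 1 by omega, iterate_succ_apply']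
    exact isMinuscule_sub_promoRow (hrow (k + 1) hk) k le_rfl

/-- The growth diagram of `evac n X` is that of `X` reflected in the antidiagonal: the local rule
is an involution, so it also fills the diagram starting from its last column. -/
lemma promoRow_iterate_evac (h : IsMinusculePath n X) {a b c : ℕ} (habc : a + b + c = n) :
    (promoRow^[a] (evac n X)) b = (promoRow^[c] X) b := by
  induction a generalizing b c with
  | zero => rw [iterate_zero, id, evac_apply, show n - b = c by omega]
  | succ a iha =>
    induction b generalizing c with
    | zero => rw [promoRow_iterate_zero, promoRow_iterate_zero, evac_apply, promoRow_iterate_zero]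
    | succ b ihb =>
      have hleft := ihb (c := c + 1) (by omega)
      have hmid := iha (b := b + 1) (c := c + 1) (by omega)
      have hright := iha (b := b + 2) (c := c) (by omega)
      rw [iterate_succ_apply'] at hleft hmid ⊢
      rw [promoRow, hleft, hmid, hright, iterate_succ_apply', promoRow]
      have hpath : IsMinusculePath (a + b + 1 + 1) (promoRow^[c] X) :=
        isMinusculePath_promoRow_iterate c (by rwa [show a + b + 1 + 1 + c = n by omega])
      exact (isCell_promoRow hpath (by omega)).localRule_localRule (hpath.antitone _ (by omega))

lemma evac_evac (h : IsMinusculePath n X) {k : ℕ} (hk : k ≤ n) : evac n (evac n X) k = X k := by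
  rw [evac_apply, promoRow_iterate_evac h (c := 0) (by omega), iterate_zero, id]

lemma evac_zero (n : ℕ) (X : ℕ → GP r) : evac n X 0 = X 0 := by
  rw [evac_apply, promoRow_iterate_zero]

lemma evac_self (n : ℕ) (X : ℕ → GP r) : evac n X n = X n := by
  rw [evac_apply, Nat.sub_self, iterate_zero, id]

lemma sum_evac (X : ℕ → GP r) {k : ℕ} (hk : k ≤ n) :
    ∑ x, evac n X k x = ∑ x, X n x - ∑ x, X (n - k) x + ∑ x, X 0 x := by
  rw [evac_apply, sum_promoRow_iterate, Nat.add_sub_cancel' hk]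

lemma weaklyMajorizes_evac (h : IsMinusculePath n X) {k : ℕ} (hk : k ≤ n) :
    WeaklyMajorizes (evac n X k) (X n - X (n - k) + X 0) := by
  intro I U hU hcard
  have hpath : IsMinusculePath (k + (n - k)) X := by rwa [Nat.add_sub_cancel' hk]
  have hlower := sum_sub_le_chainWeight X k (n - k) I
  have hgrow := chainWeight_le_promoRow_iterate k (n - k) hpath I
  have hupper := sum_add_chainWeight_le k 0 (X := promoRow^[n - k] X)
    (fun t ht => (isMinusculePath_promoRow_iterate _ hpath).antitone t (by omega)) hU hcard
  rw [Nat.sub_add_cancel hk] at hlower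
  rw [promoRow_iterate_zero, zero_add, ← evac_apply] at hupper
  simp only [Pi.add_apply, Pi.sub_apply, sum_add_distrib]
  linarith

end PromotionEvacuation

section Rectangular

variable {r n : ℕ}

lemma sum_eq_sum_compl_of_weaklyMajorizes {C D : GP r} {M : ℤ}
    (htotal : ∑ x, C x + ∑ x, D x = r * M)
    (hC : WeaklyMajorizes C fun x => M - D x) (hD : WeaklyMajorizes D fun x => M - C x)
    {A B : Finset (Fin r)} (hA : IsLowerSet (A : Set (Fin r))) (hB : IsLowerSet (B : Set (Fin r)))
    (hAB : #A + #B = r) : ∑ x ∈ A, C x = ∑ x ∈ Bᶜ, (M - D x) := by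
  have hAc : #Aᶜ = #B := by rw [card_compl, Fintype.card_fin]; omega
  have hBc : #Bᶜ = #A := by rw [card_compl, Fintype.card_fin]; omega
  have hle := hC hA hBc.symm
  have hge := hD hB hAc.symm
  have hCsplit := sum_add_sum_compl A C
  have hDsplit := sum_add_sum_compl B D
  have hcast : (#A : ℤ) + #B = r := by exact_mod_cast hAB
  rw [← hcast, add_mul] at htotal
  simp only [sum_sub_distrib, sum_const, nsmul_eq_mul, hAc, hBc] at hle hge ⊢
  linarith

/-- Antisymmetry of majorization, applied to `C` and the complement `M - D` of `D`. -/
lemma eq_sub_rev_of_weaklyMajorizes {C D : GP r} {M : ℤ} (htotal : ∑ x, C x + ∑ x, D x = r * M)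
    (hC : WeaklyMajorizes C fun x => M - D x) (hD : WeaklyMajorizes D fun x => M - C x)
    (i : Fin r) : C i = M - D i.rev := by
  have hIio := sum_eq_sum_compl_of_weaklyMajorizes htotal hC hD (A := Iio i) (B := Iic i.rev)
    (by simpa using isLowerSet_Iio i) (by simpa using isLowerSet_Iic i.rev)
    (by simp only [Fin.card_Iio, Fin.card_Iic, Fin.val_rev]; omega)
  have hIic := sum_eq_sum_compl_of_weaklyMajorizes htotal hC hD (A := Iic i) (B := Iio i.rev)
    (by simpa using isLowerSet_Iic i) (by simpa using isLowerSet_Iio i.rev)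
    (by simp only [Fin.card_Iio, Fin.card_Iic, Fin.val_rev]; omega)
  have hAins : Iic i = insert i (Iio i) := by ext; simp [le_iff_eq_or_lt]
  have hBins : (Iio i.rev)ᶜ = insert i.rev (Iic i.rev)ᶜ := by
    ext x
    simp only [mem_compl, mem_Iio, mem_insert, mem_Iic, not_lt, not_le]
    exact le_iff_eq_or_lt.trans (or_congr_left eq_comm)
  rw [hAins, hBins, sum_insert (by simp), sum_insert (by simp), hIio] at hIic
  exact add_right_cancel hIic

theorem evac_apply_of_rect {X : ℕ → GP r} {m₀ m : ℤ} (h : IsMinusculePath n X)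
    (h₀ : ∀ i, X 0 i = m₀) (hm : ∀ i, X n i = m) {k : ℕ} (hk : k ≤ n) (i : Fin r) :
    evac n X k i = m₀ + m - X (n - k) i.rev := by
  have hevac := weaklyMajorizes_evac h hk
  have hdual := weaklyMajorizes_evac (isMinusculePath_evac h) (Nat.sub_le n k)
  rw [evac_evac h (Nat.sub_le n k), Nat.sub_sub_self hk, evac_self, evac_zero] at hdual
  have hcompl : ∀ v : GP r, X n - v + X 0 = fun x => m₀ + m - v x := fun v => by
    funext x
    rw [Pi.add_apply, Pi.sub_apply, h₀, hm]
    ring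
  rw [hcompl] at hevac hdual
  refine eq_sub_rev_of_weaklyMajorizes ?_ hevac hdual i
  simp only [sum_evac X hk, h₀, hm, sum_const, card_univ, Fintype.card_fin, nsmul_eq_mul]
  ring

theorem promo_iterate_of_rect {X : ℕ → GP r} {m₀ m : ℤ} (h : IsMinusculePath n X)
    (h₀ : ∀ i, X 0 i = m₀) (hm : ∀ i, X n i = m) : (promo n)^[n] X = X := by
  funext k
  rcases le_or_gt n k with hk | hk
  · exact promo_iterate_apply_of_le n X hk
  set Y := (promo n)^[k] X with hY
  have hYpath : IsMinusculePath n Y := isMinusculePath_promo_iterate k h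
  have hY₀ : ∀ i, Y 0 i = m₀ := fun i => by
    rw [hY, promo_iterate_apply X (by omega), promoRow_iterate_zero, h₀]
  have hYn : ∀ i, Y n i = m := fun i => by rw [hY, promo_iterate_apply_of_le k X le_rfl, hm]
  have hYk : Y (n - k) = evac n X (n - k) := by
    rw [hY, ← promo_iterate_sub_apply X (Nat.sub_le n k), Nat.sub_sub_self hk.le]
  have hsplit : (promo n)^[n] X = (promo n)^[n - k] Y := by
    rw [hY, ← iterate_add_apply, Nat.sub_add_cancel hk.le]
  funext i
  calc (promo n)^[n] X k i
      = evac n Y k i := by rw [hsplit, promo_iterate_sub_apply Y hk.le]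
    _ = m₀ + m - evac n X (n - k) i.rev := by
        rw [evac_apply_of_rect hYpath hY₀ hYn hk.le, hYk]
    _ = X k i := by
        rw [evac_apply_of_rect h h₀ hm (Nat.sub_le n k), Nat.sub_sub_self hk.le, Fin.rev_rev,
          sub_sub_cancel]

lemma isMinusculePath_of_isSkewFT {T : ℕ → GP r} {c : ℕ → ℤ} (hT : IsSkewFT r n T c) :
    IsMinusculePath n T := by
  refine ⟨hT.1, fun k hk a b => ?_⟩
  obtain ⟨S, _, hS⟩ := hT.2 k hk
  split_ifs at hS <;> simp only [hS, Pi.add_apply, Pi.sub_apply, indV] <;> split_ifs <;> omega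

end Rectangular

theorem promotion_order_and_evacuation_general
    (r n : ℕ) (T : ℕ → GP r) (m₀ m : ℤ)
    (hT : IsMinusculePath n T) (h₀ : ∀ i, T 0 i = m₀) (hrect : ∀ i, T n i = m) :
    (promo n)^[n] T = T ∧
    ∀ k ≤ n, ∀ i : Fin r, evac n T k i = m₀ + m - T (n - k) i.rev :=
  ⟨promo_iterate_of_rect hT h₀ hrect, fun _ hk i => evac_apply_of_rect hT h₀ hrect hk i⟩

/-- **Theorem.** Let `T` be a rectangular fluctuating tableau with `r` rows, length `n`
and final shape `(m,…,m)`.  Then (a) `P^n(T) = T`, and (b) `E(T) = ε(T)` where `ε(T)`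
is normalized (by adding `(m,…,m)`) so as to begin at `(0,…,0)`; concretely,
`E(T)^k_i = m - T^{n-k}_{rev(i)}` for all `0 ≤ k ≤ n`. -/
theorem promotion_order_and_evacuation
    (r n : ℕ) (T : ℕ → GP r) (c : ℕ → ℤ) (m : ℤ)
    (hT : IsFT r n T c) (hrect : ∀ i, T n i = m) :
    (promo n)^[n] T = T ∧
    ∀ k ≤ n, ∀ i : Fin r, evac n T k i = m - T (n - k) i.rev := by
  simpa only [zero_add] using promotion_order_and_evacuation_general r n T 0 m
    (isMinusculePath_of_isSkewFT hT.1) (congrFun hT.2) hrect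

end FT
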